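/- arXiv:1005.2512 — 5 statements merged into one kernel-verified Lean document; each statement's English description precedes it below -/
import Mathlib

section
/- Let k, μ₊, μ₋ > 0, γ ≥ 0, and ϖ ∈ ℝ with ϖ < γ. For m ∈ ℕ, m ≥ 1, define λ_m := (k·m·tanh(m)/(μ₊ + μ₋·tanh²(m)))·(ϖ − γ·m²). Then for every m ≥ 1, λ_m ≤ −k·tanh(1)·(γ − ϖ)/(μ₊ + μ₋·tanh(1)). -/
/-! Write `t = tanh x` and `s = a * tanh a` for wave numbers `0 < a ≤ x`. Since `γ ≥ 0`, the factor
`γ x² - ϖ` is at least `γ a² - ϖ`, so it suffices to compare the prefactors. Now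
`x t / (μ₊ + μ₋ t²) = 1 / (μ₊ / (x t) + μ₋ t / x)`, where `x t ≥ s` because `tanh` is increasing
and `t / x ≤ 1`; hence the prefactor is at least `1 / (μ₊ / s + μ₋) = s / (μ₊ + μ₋ s)`. The
eigenvalues `λ_m`, `m ≥ 1`, are the case of lowest wave number `a = 1`. -/

theorem tanh_strictMono : StrictMono Real.tanh := fun x y hxy ↦ by
  rw [Real.tanh_eq_sinh_div_cosh, Real.tanh_eq_sinh_div_cosh,
    div_lt_div_iff₀ (Real.cosh_pos x) (Real.cosh_pos y)]
  have hsinh : 0 < Real.sinh (y - x) := Real.sinh_pos_iff.mpr (sub_pos.mpr hxy)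
  rw [Real.sinh_sub] at hsinh
  linarith

theorem tanh_nonneg {x : ℝ} (hx : 0 ≤ x) : 0 ≤ Real.tanh x :=
  Real.tanh_zero ▸ tanh_strictMono.monotone hx

theorem sinh_le_mul_cosh {x : ℝ} (hx : 0 ≤ x) : Real.sinh x ≤ x * Real.cosh x := by
  have hderiv : ∀ y ∈ interior (Set.Icc 0 x), deriv Real.sinh y ≤ Real.cosh x := fun y hy ↦ by
    have hy' : y ∈ Set.Icc 0 x := interior_subset hy
    rw [Real.deriv_sinh, Real.cosh_le_cosh, abs_of_nonneg hy'.1, abs_of_nonneg hx]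
    exact hy'.2
  simpa [mul_comm] using (convex_Icc 0 x).image_sub_le_mul_sub_of_deriv_le
    Real.continuous_sinh.continuousOn Real.differentiable_sinh.differentiableOn hderiv
    0 (Set.left_mem_Icc.mpr hx) x (Set.right_mem_Icc.mpr hx) hx

theorem tanh_le_self {x : ℝ} (hx : 0 ≤ x) : Real.tanh x ≤ x := by
  rw [Real.tanh_eq_sinh_div_cosh, div_le_iff₀ (Real.cosh_pos x)]
  exact sinh_le_mul_cosh hx

theorem div_add_mul_le_mul_div_add_mul_sq {K : Type*} [Field K] [LinearOrder K]
    [IsStrictOrderedRing K] {p q s t x : K} (hp : 0 < p) (hq : 0 ≤ q) (hs : 0 ≤ s) (ht : 0 ≤ t)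
    (hst : s ≤ x * t) (htx : t ≤ x) :
    s / (p + q * s) ≤ x * t / (p + q * t ^ 2) := by
  rw [div_le_div_iff₀ (by positivity) (by positivity)]
  calc
    s * (p + q * t ^ 2) = s * p + q * s * t * t := by ring
    _ ≤ x * t * p + q * s * t * x := by gcongr
    _ = x * t * (p + q * s) := by ring

theorem muskat_spectral_bound_general {k μp μm γ ϖ a x : ℝ} (hk : 0 ≤ k) (hμp : 0 < μp)
    (hμm : 0 ≤ μm) (hγ : 0 ≤ γ) (ha : 0 ≤ a) (hϖ : ϖ ≤ γ * a ^ 2) (hax : a ≤ x) :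
    (k * x * Real.tanh x / (μp + μm * Real.tanh x ^ 2)) * (ϖ - γ * x ^ 2)
      ≤ -(k * (a * Real.tanh a) * (γ * a ^ 2 - ϖ)) / (μp + μm * (a * Real.tanh a)) := by
  have hx : 0 ≤ x := ha.trans hax
  have htanh_a : 0 ≤ Real.tanh a := tanh_nonneg ha
  have htanh_x : 0 ≤ Real.tanh x := tanh_nonneg hx
  have hmul_tanh : a * Real.tanh a ≤ x * Real.tanh x :=
    mul_le_mul hax (tanh_strictMono.monotone hax) htanh_a hx
  have hprefactor : a * Real.tanh a / (μp + μm * (a * Real.tanh a))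
      ≤ x * Real.tanh x / (μp + μm * Real.tanh x ^ 2) :=
    div_add_mul_le_mul_div_add_mul_sq hμp hμm (by positivity) htanh_x hmul_tanh (tanh_le_self hx)
  have hgap : γ * a ^ 2 - ϖ ≤ γ * x ^ 2 - ϖ := by gcongr
  calc
    (k * x * Real.tanh x / (μp + μm * Real.tanh x ^ 2)) * (ϖ - γ * x ^ 2)
        = -(k * (x * Real.tanh x / (μp + μm * Real.tanh x ^ 2) * (γ * x ^ 2 - ϖ))) := by ring
    _ ≤ -(k * (a * Real.tanh a / (μp + μm * (a * Real.tanh a)) * (γ * a ^ 2 - ϖ))) :=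
      neg_le_neg <| mul_le_mul_of_nonneg_left
        (mul_le_mul hprefactor hgap (sub_nonneg.mpr hϖ) (by positivity)) hk
    _ = -(k * (a * Real.tanh a) * (γ * a ^ 2 - ϖ)) / (μp + μm * (a * Real.tanh a)) := by ring

/-- stability bound. If `ϖ < γ`, `γ ≥ 0`, then all eigenvalues
`λ_m = (k·m·tanh m/(μ₊ + μ₋·tanh² m))·(ϖ − γ·m²)`, `m ≥ 1`, satisfy the uniform bound
`λ_m ≤ −k·tanh(1)·(γ − ϖ)/(μ₊ + μ₋·tanh 1)`. -/
theorem muskat_spectral_bound (k μp μm γ ϖ : ℝ)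
    (hk : 0 < k) (hμp : 0 < μp) (hμm : 0 < μm) (hγ : 0 ≤ γ) (h : ϖ < γ) :
    ∀ m : ℕ, 1 ≤ m →
      (k * m * Real.tanh m / (μp + μm * Real.tanh m ^ 2)) * (ϖ - γ * (m : ℝ) ^ 2)
        ≤ -(k * Real.tanh 1 * (γ - ϖ)) / (μp + μm * Real.tanh 1) := by
  intro m hm
  simpa only [one_mul, one_pow, mul_one] using muskat_spectral_bound_general (a := 1) hk.le hμp
    hμm.le hγ zero_le_one (by simpa using h.le) (Nat.one_le_cast.mpr hm)
end

section
/- Let l ≥ 1 be a natural number, γ ∈ ℝ, and set f(x) = cos(l·x). Then ∫₀^{2π} (−9γ·f'(x)²·f'''(x) − 18γ·f'(x)·f''(x)²)·sin(l·x) dx = −(9π/4)·γ·l⁵, and ∫₀^{2π} l³·sin²(l·x) dx = π·l³. Consequently, −(1/3)·(−(9π/4)·γ·l⁵)/(π·l³) = (3/4)·γ·l², and if γ = ϖ/l² for some ϖ ∈ ℝ this value equals 3ϖ/4. -/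
/-!
With `s = sin (l x)` and `c = cos (l x)`, the derivatives of `cos (l x)` are `-l s`, `-l² c` and
`l³ s`, so the first integrand is `-9 γ l⁵ (s⁴ - 2 s² c²)`. A nonzero integer dilation does not
change the integral of a periodic function over a period, so `l` may be replaced by `1` inside
the sines and cosines, where `∫ sin⁴ = 3 π / 4`, `∫ sin² cos² = π / 4` and `∫ sin² = π`.
-/

open Real

theorem integral_comp_intCast_mul_of_periodic {E : Type*} [NormedAddCommGroup E] [NormedSpace ℝ E]
    {f : ℝ → E} {T : ℝ} (hf : Function.Periodic f T)
    (h_int : ∀ t₁ t₂, IntervalIntegrable f MeasureTheory.volume t₁ t₂) {n : ℤ} (hn : n ≠ 0)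
    (t : ℝ) :
    ∫ x in t..t + T, f (n * x) = ∫ x in t..t + T, f x := by
  have hn' : (n : ℝ) ≠ 0 := Int.cast_ne_zero.mpr hn
  calc ∫ x in t..t + T, f (n * x)
      = (n : ℝ)⁻¹ • ∫ x in n * t..n * t + n • T, f x := by
        rw [intervalIntegral.integral_comp_mul_left f hn', mul_add, zsmul_eq_mul]
    _ = (n : ℝ)⁻¹ • n • ∫ x in t..t + T, f x := by
        rw [hf.intervalIntegral_add_zsmul_eq n _ h_int, hf.intervalIntegral_add_eq (n * t) t]
    _ = ∫ x in t..t + T, f x := by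
        rw [← Int.cast_smul_eq_zsmul ℝ, inv_smul_smul₀ hn']

theorem deriv_cos_const_mul (a : ℝ) :
    deriv (fun x => cos (a * x)) = fun x => -a * sin (a * x) := by
  ext x
  simp [deriv_comp_mul_left a cos x]

theorem deriv_sin_const_mul (a : ℝ) :
    deriv (fun x => sin (a * x)) = fun x => a * cos (a * x) := by
  ext x
  simp [deriv_comp_mul_left a sin x]

theorem deriv_deriv_cos_const_mul (a : ℝ) :
    deriv (deriv fun x => cos (a * x)) = fun x => -a ^ 2 * cos (a * x) := by
  ext x
  rw [deriv_cos_const_mul, deriv_const_mul_field, deriv_sin_const_mul]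
  ring

theorem deriv_deriv_deriv_cos_const_mul (a : ℝ) :
    deriv (deriv (deriv fun x => cos (a * x))) = fun x => a ^ 3 * sin (a * x) := by
  ext x
  rw [deriv_deriv_cos_const_mul, deriv_const_mul_field, deriv_cos_const_mul]
  ring

theorem integral_sin_sq_zero_two_pi : ∫ x in 0..2 * π, sin x ^ 2 = π := by
  simp [integral_sin_sq]

theorem integral_sin_pow_four_zero_two_pi : ∫ x in 0..2 * π, sin x ^ 4 = 3 * π / 4 := by
  rw [integral_sin_pow (n := 2), integral_sin_sq_zero_two_pi, sin_zero, sin_two_pi]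
  ring

theorem integral_sin_sq_mul_cos_sq_zero_two_pi :
    ∫ x in 0..2 * π, sin x ^ 2 * cos x ^ 2 = π / 4 := by
  have sin_eight_pi : sin (4 * (2 * π)) = 0 :=
    mod_cast (sin_periodic.nat_mul_eq 4).trans sin_zero
  rw [integral_sin_sq_mul_cos_sq, sin_eight_pi, mul_zero, sin_zero]
  ring

theorem integral_sin_pow_four_sub_two_mul_sin_sq_mul_cos_sq_zero_two_pi :
    ∫ x in 0..2 * π, (sin x ^ 4 - 2 * (sin x ^ 2 * cos x ^ 2)) = π / 4 := by
  rw [intervalIntegral.integral_sub, intervalIntegral.integral_const_mul,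
    integral_sin_pow_four_zero_two_pi, integral_sin_sq_mul_cos_sq_zero_two_pi]
  · ring
  all_goals exact Continuous.intervalIntegrable (by fun_prop) _ _

theorem integral_sin_sq_intCast_mul {n : ℤ} (hn : n ≠ 0) :
    ∫ x in 0..2 * π, sin (n * x) ^ 2 = π := by
  have periodic : Function.Periodic (fun x => sin x ^ 2) (2 * π) := sin_periodic.comp (· ^ 2)
  have continuous : Continuous fun x => sin x ^ 2 := by fun_prop
  simpa only [zero_add, integral_sin_sq_zero_two_pi] using
    integral_comp_intCast_mul_of_periodic periodic continuous.intervalIntegrable hn 0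

theorem integral_sin_pow_four_sub_two_mul_sin_sq_mul_cos_sq_intCast_mul {n : ℤ} (hn : n ≠ 0) :
    ∫ x in 0..2 * π, (sin (n * x) ^ 4 - 2 * (sin (n * x) ^ 2 * cos (n * x) ^ 2)) = π / 4 := by
  have periodic :
      Function.Periodic (fun x => sin x ^ 4 - 2 * (sin x ^ 2 * cos x ^ 2)) (2 * π) :=
    fun x => by simp only [sin_add_two_pi, cos_add_two_pi]
  have continuous : Continuous fun x => sin x ^ 4 - 2 * (sin x ^ 2 * cos x ^ 2) := by fun_prop
  simpa only [zero_add, integral_sin_pow_four_sub_two_mul_sin_sq_mul_cos_sq_zero_two_pi] using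
    integral_comp_intCast_mul_of_periodic periodic continuous.intervalIntegrable hn 0

/-- the Crandall–Rabinowitz integrals along the `l`-th bifurcation branch.
For `f(x) = cos(l x)`:
`∫₀^{2π} (−9γ f'² f''' − 18γ f' f''²)·sin(lx) dx = −(9π/4)·γ·l⁵`,
`∫₀^{2π} l³·sin²(lx) dx = π·l³`, hence
`−(1/3)·(−(9π/4)γl⁵)/(πl³) = (3/4)·γ·l²`, which equals `3ϖ/4` when `γ = ϖ/l²`. -/
theorem muskat_crandall_rabinowitz_integrals (l : ℕ) (hl : 1 ≤ l) (γ : ℝ)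
    (f : ℝ → ℝ) (hf : f = fun x : ℝ => Real.cos (l * x)) :
    (∫ x in (0 : ℝ)..(2 * π),
        (-9 * γ * (deriv f x) ^ 2 * deriv (deriv (deriv f)) x
          - 18 * γ * deriv f x * (deriv (deriv f) x) ^ 2) * Real.sin (l * x))
      = -(9 * π / 4) * γ * (l : ℝ) ^ 5 ∧
    (∫ x in (0 : ℝ)..(2 * π), (l : ℝ) ^ 3 * Real.sin (l * x) ^ 2) = π * (l : ℝ) ^ 3 ∧
    -(1 / 3) * (-(9 * π / 4) * γ * (l : ℝ) ^ 5) / (π * (l : ℝ) ^ 3)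
      = (3 / 4) * γ * (l : ℝ) ^ 2 ∧
    (∀ ϖ : ℝ, γ = ϖ / (l : ℝ) ^ 2 → (3 / 4) * γ * (l : ℝ) ^ 2 = 3 * ϖ / 4) := by
  have l_ne_zero : (l : ℤ) ≠ 0 := by lia
  have integral_quartic :=
    integral_sin_pow_four_sub_two_mul_sin_sq_mul_cos_sq_intCast_mul l_ne_zero
  have integral_sq := integral_sin_sq_intCast_mul l_ne_zero
  rw [Int.cast_natCast] at integral_quartic integral_sq
  subst hf
  refine ⟨?_, ?_, ?_, ?_⟩
  · calc _ = ∫ x in 0..2 * π, (-9 * γ * l ^ 5) *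
            (sin (l * x) ^ 4 - 2 * (sin (l * x) ^ 2 * cos (l * x) ^ 2)) := by
          rw [deriv_deriv_deriv_cos_const_mul, deriv_deriv_cos_const_mul, deriv_cos_const_mul]
          congr with x
          ring
      _ = (-9 * γ * l ^ 5) * (π / 4) := by
          rw [intervalIntegral.integral_const_mul, integral_quartic]
      _ = -(9 * π / 4) * γ * l ^ 5 := by ring
  · rw [intervalIntegral.integral_const_mul, integral_sq, mul_comm]
  · field_simp
    norm_num
  · rintro ϖ rfl
    field_simp
end

section
/- Let f : ℝ → ℝ be twice continuously differentiable with sup|f| < 1, define φ(x,y) := (x, y + (1+y)·f(x)) and ψ(x,y) := (x, (y − f(x))/(1 + f(x))). Let v : ℝ × [−1,0] → ℝ be twice continuously differentiable on an open neighborhood of ℝ × [−1,0]. Then for every (x,y) ∈ ℝ × (−1,0), the Laplacian of v∘ψ evaluated at φ(x,y) satisfies Δ(v∘ψ)(φ(x,y)) = ∂²v/∂x²(x,y) − 2·((1+y)·f'(x)/(1+f(x)))·∂²v/∂x∂y(x,y) + (((1+y)²·f'(x)² + 1)/(1+f(x))²)·∂²v/∂y²(x,y) − (1+y)·((1+f(x))·f''(x)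 − 2·f'(x)²)/(1+f(x))²·∂v/∂y(x,y). -/
/-!
Freezing `b = y + (1 + y) f x`, the `x`-derivatives of `v ∘ ψ` at `φ (x, y)` are derivatives of `v`
along the graph of `g s = (b - f s) / (1 + f s)`, which passes through `(x, y)`. The second-order
chain rule along a graph gives `v_xx + 2 g' v_xy + g'² v_yy + g'' v_y`. Since
`b + 1 = (1 + y) (1 + f x)`, one power of `1 + f x` cancels in `g'` and in `g''`. In the vertical
direction `ψ` is affine with slope `1 / (1 + f x)` and only contributes to the `v_yy` term.
-/

open scoped Topology

section ChainRule

variable {𝕜 E F : Type*} [NontriviallyNormedField 𝕜] [NormedAddCommGroup E] [NormedSpace 𝕜 E]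
  [NormedAddCommGroup F] [NormedSpace 𝕜 F]

theorem hasFDerivAt_fderiv_of_contDiffAt {h : E → F} {p : E} (hh : ContDiffAt 𝕜 2 h p) :
    HasFDerivAt (fderiv 𝕜 h) (fderiv 𝕜 (fderiv 𝕜 h) p) p :=
  ((hh.fderiv_right (m := 1) one_add_one_eq_two.le).differentiableAt one_ne_zero).hasFDerivAt

theorem hasDerivAt_deriv_of_contDiffAt {c : 𝕜 → E} {t : 𝕜} (hc : ContDiffAt 𝕜 2 c t) :
    HasDerivAt (deriv c) (deriv (deriv c) t) t :=
  ((hc.derivWithin one_add_one_eq_two.le).differentiableAt one_ne_zero).hasDerivAt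

theorem deriv_comp_eventuallyEq {h : E → F} {c : 𝕜 → E} {t : 𝕜} (hh : ContDiffAt 𝕜 1 h (c t))
    (hc : ContDiffAt 𝕜 1 c t) :
    deriv (fun s => h (c s)) =ᶠ[𝓝 t] fun s => fderiv 𝕜 h (c s) (deriv c s) := by
  filter_upwards [hc.continuousAt.eventually (hh.eventually (by simp)), hc.eventually (by simp)]
    with s hhs hcs
  exact fderiv_comp_deriv s (hhs.differentiableAt one_ne_zero) (hcs.differentiableAt one_ne_zero)

theorem deriv_deriv_comp {h : E → F} {c : 𝕜 → E} {t : 𝕜} (hh : ContDiffAt 𝕜 2 h (c t))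
    (hc : ContDiffAt 𝕜 2 c t) :
    deriv (deriv fun s => h (c s)) t =
      fderiv 𝕜 (fderiv 𝕜 h) (c t) (deriv c t) (deriv c t) +
        fderiv 𝕜 h (c t) (deriv (deriv c) t) := by
  have hc' : HasDerivAt c (deriv c t) t := (hc.differentiableAt two_ne_zero).hasDerivAt
  rw [(deriv_comp_eventuallyEq (hh.of_le one_le_two) (hc.of_le one_le_two)).deriv_eq]
  exact (((hasFDerivAt_fderiv_of_contDiffAt hh).comp_hasDerivAt t hc').clm_apply
    (hasDerivAt_deriv_of_contDiffAt hc)).deriv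

theorem deriv_deriv_comp_sub_div (h : 𝕜 → F) (a m t : 𝕜) :
    deriv (deriv fun s => h ((s - a) / m)) t = (m⁻¹ ^ 2) • deriv (deriv h) ((t - a) / m) := by
  have deriv_comp_affine (k : 𝕜 → F) (s : 𝕜) :
      deriv (fun s => k ((s - a) / m)) s = m⁻¹ • deriv k ((s - a) / m) := by
    simp only [div_eq_inv_mul]
    rw [deriv_comp_sub_const (f := fun s => k (m⁻¹ * s)), deriv_comp_mul_left]
  rw [funext (deriv_comp_affine h), deriv_fun_const_smul_field, deriv_comp_affine, smul_smul, sq]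

theorem fderiv_fderiv_add_smul_self {h : E → F} {p : E} (hsymm : IsSymmSndFDerivAt 𝕜 h p)
    (u w : E) (k : 𝕜) :
    fderiv 𝕜 (fderiv 𝕜 h) p (u + k • w) (u + k • w) =
      fderiv 𝕜 (fderiv 𝕜 h) p u u + (2 * k) • fderiv 𝕜 (fderiv 𝕜 h) p u w +
        k ^ 2 • fderiv 𝕜 (fderiv 𝕜 h) p w w := by
  simp only [map_add, map_smul, add_apply, smul_apply, hsymm.eq w u]
  module

end ChainRule

section Partial

variable {𝕜 E : Type*} [NontriviallyNormedField 𝕜] [NormedAddCommGroup E] [NormedSpace 𝕜 E]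
  {h : 𝕜 × 𝕜 → E} {a b : 𝕜}

theorem hasDerivAt_prodMk_const (a b : 𝕜) : HasDerivAt (fun s => (s, b)) ((1 : 𝕜), (0 : 𝕜)) a :=
  (hasDerivAt_id a).prodMk (hasDerivAt_const a b)

theorem hasDerivAt_const_prodMk (a b : 𝕜) : HasDerivAt (fun t => (a, t)) ((0 : 𝕜), (1 : 𝕜)) b :=
  (hasDerivAt_const b a).prodMk (hasDerivAt_id b)

theorem deriv_snd_eq_fderiv (hh : DifferentiableAt 𝕜 h (a, b)) :
    deriv (fun t => h (a, t)) b = fderiv 𝕜 h (a, b) (0, 1) :=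
  (hh.hasFDerivAt.comp_hasDerivAt b (hasDerivAt_const_prodMk a b)).deriv

theorem deriv_deriv_fst_eq_fderiv_fderiv (hh : ContDiffAt 𝕜 2 h (a, b)) :
    deriv (deriv fun s => h (s, b)) a = fderiv 𝕜 (fderiv 𝕜 h) (a, b) (1, 0) (1, 0) := by
  have velocity : deriv (fun s : 𝕜 => (s, b)) = fun _ => (1, 0) :=
    funext fun s => (hasDerivAt_prodMk_const s b).deriv
  rw [deriv_deriv_comp (c := fun s => (s, b)) hh (by fun_prop), velocity, deriv_const, map_zero,
    add_zero]

theorem deriv_deriv_snd_eq_fderiv_fderiv (hh : ContDiffAt 𝕜 2 h (a, b)) :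
    deriv (deriv fun t => h (a, t)) b = fderiv 𝕜 (fderiv 𝕜 h) (a, b) (0, 1) (0, 1) := by
  have velocity : deriv (fun t : 𝕜 => (a, t)) = fun _ => (0, 1) :=
    funext fun t => (hasDerivAt_const_prodMk a t).deriv
  rw [deriv_deriv_comp hh (by fun_prop), velocity, deriv_const, map_zero, add_zero]

theorem deriv_fst_deriv_snd_eq_fderiv_fderiv (hh : ContDiffAt 𝕜 2 h (a, b)) :
    deriv (fun s => deriv (fun t => h (s, t)) b) a =
      fderiv 𝕜 (fderiv 𝕜 h) (a, b) (1, 0) (0, 1) := by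
  have hline := hasDerivAt_prodMk_const a b
  have hsnd : (fun s => deriv (fun t => h (s, t)) b) =ᶠ[𝓝 a]
      fun s => fderiv 𝕜 h (s, b) (0, 1) := by
    filter_upwards [hline.continuousAt.eventually (hh.eventually (by simp))] with s hs
    exact deriv_snd_eq_fderiv (hs.differentiableAt two_ne_zero)
  have hfderiv : HasDerivAt (fun s => fderiv 𝕜 h (s, b))
      (fderiv 𝕜 (fderiv 𝕜 h) (a, b) (1, 0)) a :=
    (hasFDerivAt_fderiv_of_contDiffAt hh).comp_hasDerivAt a hline
  rw [hsnd.deriv_eq]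
  simpa using (hfderiv.clm_apply (hasDerivAt_const a ((0 : 𝕜), (1 : 𝕜)))).deriv

theorem deriv_deriv_comp_graph {g : 𝕜 → 𝕜} (hh : ContDiffAt 𝕜 (minSmoothness 𝕜 2) h (a, g a))
    (hg : ContDiffAt 𝕜 2 g a) :
    deriv (deriv fun s => h (s, g s)) a =
      deriv (deriv fun s => h (s, g a)) a +
        (2 * deriv g a) • deriv (fun s => deriv (fun t => h (s, t)) (g a)) a +
        deriv g a ^ 2 • deriv (deriv fun t => h (a, t)) (g a) +
        deriv (deriv g) a • deriv (fun t => h (a, t)) (g a) := by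
  have hh₂ : ContDiffAt 𝕜 2 h (a, g a) := hh.of_le le_minSmoothness
  have velocity : deriv (fun s => (s, g s)) =ᶠ[𝓝 a] fun s => (1, deriv g s) := by
    filter_upwards [hg.eventually (by simp)] with s hs
    exact ((hasDerivAt_id s).prodMk (hs.differentiableAt two_ne_zero).hasDerivAt).deriv
  have acceleration : deriv (fun s => ((1 : 𝕜), deriv g s)) a = deriv (deriv g) a • (0, 1) := by
    simpa using ((hasDerivAt_const a (1 : 𝕜)).prodMk (hasDerivAt_deriv_of_contDiffAt hg)).deriv
  have velocity_eq : ((1 : 𝕜), deriv g a) = (1, 0) + deriv g a • (0, 1) := by simp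
  rw [deriv_deriv_comp (c := fun s => (s, g s)) hh₂ (contDiffAt_id.prodMk hg),
    velocity.deriv_eq, acceleration, velocity.eq_of_nhds, velocity_eq,
    fderiv_fderiv_add_smul_self (hh.isSymmSndFDerivAt le_rfl), map_smul,
    deriv_deriv_fst_eq_fderiv_fderiv hh₂, deriv_fst_deriv_snd_eq_fderiv_fderiv hh₂,
    deriv_deriv_snd_eq_fderiv_fderiv hh₂,
    deriv_snd_eq_fderiv (hh₂.differentiableAt two_ne_zero)]

end Partial

section Straightening

variable {𝕜 : Type*} [Field 𝕜] {f : 𝕜 → 𝕜} {x : 𝕜}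

/-- Second component of the map `φ (x, y) = (x, y + (1 + y) f x)` from the reference strip to the
fluid domain below the graph of `f`; the first component is `x`. -/
def domainHeight (f : 𝕜 → 𝕜) (x y : 𝕜) : 𝕜 :=
  y + (1 + y) * f x

/-- Second component of the inverse `ψ (x, b) = (x, (b - f x) / (1 + f x))` of `φ`; the first
component is `x`. The value is the junk value `0` where `1 + f x = 0`. -/
def stripHeight (f : 𝕜 → 𝕜) (x b : 𝕜) : 𝕜 :=
  (b - f x) / (1 + f x)

theorem stripHeight_domainHeight (hx : 1 + f x ≠ 0) (y : 𝕜) :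
    stripHeight f x (domainHeight f x y) = y := by
  rw [stripHeight, domainHeight, div_eq_iff hx]
  ring

theorem domainHeight_add_one (f : 𝕜 → 𝕜) (x y : 𝕜) :
    domainHeight f x y + 1 = (1 + y) * (1 + f x) := by
  rw [domainHeight]
  ring

end Straightening

section TransformedLaplacian

variable {𝕜 : Type*} [NontriviallyNormedField 𝕜] {f : 𝕜 → 𝕜} {x y b : 𝕜}

theorem contDiffAt_stripHeight {n : WithTop ℕ∞} (hf : ContDiffAt 𝕜 n f x) (hx : 1 + f x ≠ 0) :
    ContDiffAt 𝕜 n (fun s => stripHeight f s b) x :=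
  (contDiffAt_const.sub hf).div (contDiffAt_const.add hf) hx

theorem deriv_stripHeight (hf : DifferentiableAt 𝕜 f x) (hx : 1 + f x ≠ 0) :
    deriv (fun s => stripHeight f s b) x = -(b + 1) * deriv f x / (1 + f x) ^ 2 := by
  refine (((hf.hasDerivAt.const_sub b).div (hf.hasDerivAt.const_add 1) hx).congr_deriv ?_).deriv
  ring

theorem deriv_deriv_stripHeight (hf : ContDiffAt 𝕜 2 f x) (hx : 1 + f x ≠ 0) :
    deriv (deriv fun s => stripHeight f s b) x =
      -(b + 1) * ((1 + f x) * deriv (deriv f) x - 2 * deriv f x ^ 2) / (1 + f x) ^ 3 := by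
  have hf' : HasDerivAt f (deriv f x) x := (hf.differentiableAt two_ne_zero).hasDerivAt
  have hderiv : deriv (fun s => stripHeight f s b) =ᶠ[𝓝 x]
      fun s => -(b + 1) * deriv f s / (1 + f s) ^ 2 := by
    filter_upwards [hf.eventually (by simp), (hf'.continuousAt.const_add 1).eventually_ne hx]
      with s hfs hs
    exact deriv_stripHeight (hfs.differentiableAt two_ne_zero) hs
  rw [hderiv.deriv_eq]
  refine ((((hasDerivAt_deriv_of_contDiffAt hf).const_mul (-(b + 1))).fun_div
    ((hf'.const_add 1).fun_pow 2) (pow_ne_zero 2 hx)).congr_deriv ?_).deriv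
  field_simp
  ring

theorem deriv_stripHeight_domainHeight (hf : DifferentiableAt 𝕜 f x) (hx : 1 + f x ≠ 0) :
    deriv (fun s => stripHeight f s (domainHeight f x y)) x =
      -((1 + y) * deriv f x / (1 + f x)) := by
  rw [deriv_stripHeight hf hx, domainHeight_add_one]
  field_simp

theorem deriv_deriv_stripHeight_domainHeight (hf : ContDiffAt 𝕜 2 f x) (hx : 1 + f x ≠ 0) :
    deriv (deriv fun s => stripHeight f s (domainHeight f x y)) x =
      -((1 + y) * ((1 + f x) * deriv (deriv f) x - 2 * deriv f x ^ 2) / (1 + f x) ^ 2) := by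
  rw [deriv_deriv_stripHeight hf hx, domainHeight_add_one]
  field_simp

theorem muskat_transformed_laplacian_general {E : Type*} [NormedAddCommGroup E] [NormedSpace 𝕜 E]
    {v : 𝕜 → 𝕜 → E} (hf : ContDiffAt 𝕜 2 f x) (hx : 1 + f x ≠ 0)
    (hv : ContDiffAt 𝕜 (minSmoothness 𝕜 2) (Function.uncurry v) (x, y)) :
    deriv (deriv fun s => v s (stripHeight f s (domainHeight f x y))) x +
        deriv (deriv fun t => v x (stripHeight f x t)) (domainHeight f x y) =
      deriv (deriv fun s => v s y) x -
        (2 * ((1 + y) * deriv f x / (1 + f x))) • deriv (fun s => deriv (fun t => v s t) y) x +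
        (((1 + y) ^ 2 * deriv f x ^ 2 + 1) / (1 + f x) ^ 2) • deriv (deriv fun t => v x t) y -
        ((1 + y) * ((1 + f x) * deriv (deriv f) x - 2 * deriv f x ^ 2) / (1 + f x) ^ 2) •
          deriv (fun t => v x t) y := by
  have hψφ := stripHeight_domainHeight hx y
  have horizontal := deriv_deriv_comp_graph (h := Function.uncurry v)
    (g := fun s => stripHeight f s (domainHeight f x y)) (by rwa [hψφ])
    (contDiffAt_stripHeight hf hx)
  have vertical : deriv (deriv fun t => v x (stripHeight f x t)) (domainHeight f x y) =
      (1 + f x)⁻¹ ^ 2 • deriv (deriv (v x)) (stripHeight f x (domainHeight f x y)) :=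
    deriv_deriv_comp_sub_div (v x) (f x) (1 + f x) (domainHeight f x y)
  simp only [Function.uncurry_apply_pair, hψφ, deriv_deriv_stripHeight_domainHeight hf hx,
    deriv_stripHeight_domainHeight (hf.differentiableAt two_ne_zero) hx] at horizontal
  rw [horizontal, vertical, hψφ]
  match_scalars <;> field_simp

end TransformedLaplacian

/-- explicit representation of the transformed Laplacian
`A₋(f) = φ* Δ φ_*` for the straightening diffeomorphism `φ(x,y) = (x, y + (1+y)f(x))`
of the lower fluid domain, with inverse `ψ(x,y) = (x, (y−f(x))/(1+f(x)))`:
for `v` twice continuously differentiable on a neighbourhood of `ℝ × [−1,0]` and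
`(x,y) ∈ ℝ × (−1,0)`,
`Δ(v∘ψ)(φ(x,y)) = v_xx − 2·((1+y)f'/(1+f))·v_xy + (((1+y)²f'² + 1)/(1+f)²)·v_yy
  − (1+y)·((1+f)f'' − 2f'²)/(1+f)²·v_y`, all partials of `v` evaluated at `(x,y)`. -/
theorem muskat_transformed_laplacian (f : ℝ → ℝ)
    (hf : ContDiff ℝ 2 f) (hsmall : ∀ x, |f x| < 1)
    (v : ℝ → ℝ → ℝ)
    (hv : ∃ U : Set (ℝ × ℝ), IsOpen U ∧ (Set.univ ×ˢ Set.Icc (-1 : ℝ) 0) ⊆ U ∧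
      ContDiffOn ℝ 2 (Function.uncurry v) U)
    (w : ℝ → ℝ → ℝ)
    (hw : w = fun a b : ℝ => v a ((b - f a) / (1 + f a))) :
    ∀ x y : ℝ, -1 < y → y < 0 →
      deriv (deriv (fun s => w s (y + (1 + y) * f x))) x
          + deriv (deriv (fun s => w x s)) (y + (1 + y) * f x)
        = deriv (deriv (fun s => v s y)) x
          - 2 * ((1 + y) * deriv f x / (1 + f x)) *
              deriv (fun s => deriv (fun t => v s t) y) x
          + (((1 + y) ^ 2 * (deriv f x) ^ 2 + 1) / (1 + f x) ^ 2) *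
              deriv (deriv (fun t => v x t)) y
          - (1 + y) * ((1 + f x) * deriv (deriv f) x - 2 * (deriv f x) ^ 2) / (1 + f x) ^ 2 *
              deriv (fun t => v x t) y := by
  intro x y hy₁ hy₀
  obtain ⟨U, hU, hstrip, hvU⟩ := hv
  have hx : 1 + f x ≠ 0 := by linarith [(abs_lt.1 (hsmall x)).1]
  have hvxy : ContDiffAt ℝ (minSmoothness ℝ 2) (Function.uncurry v) (x, y) := by
    rw [minSmoothness_of_isRCLikeNormedField]
    exact hvU.contDiffAt (hU.mem_nhds (hstrip ⟨trivial, hy₁.le, hy₀.le⟩))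
  subst hw
  exact muskat_transformed_laplacian_general hf.contDiffAt hx hvxy
end

section
/- Let γ > 0, ϖ ≤ 0, and c ∈ ℝ. Suppose f : ℝ → ℝ is twice continuously differentiable, 2π-periodic, satisfies γ·f''(x)/(1 + f'(x)²)^(3/2) + ϖ·f(x) = c for all x ∈ ℝ, and ∫₀^{2π} f(x) dx = 0. Then f ≡ 0. -/
open Real

/-!
The curvature `κ` of the graph of `f` is the derivative of `sin θ`, where `θ = arctan f'` is its
angle of inclination. Suppose `f` is periodic and `κ` is a nondecreasing function of the height.
By Rolle's theorem for `sin θ` there is `ξ` with `κ ξ = 0`. The periodic function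
`sin θ * (f - f ξ)` has the derivative `κ * (f - f ξ) + sin θ * f'`, in which both summands are
nonnegative: the first because `κ` increases with the height and vanishes at `ξ`, the second because
`sin θ` has the sign of `f'`. A periodic monotone function is constant, so both summands vanish and
`f' = 0`. A steady state is such an `f`: its curvature is `(c - ϖ f) / γ`, with `-ϖ / γ ≥ 0`.
-/

theorem eq_of_monotone_of_periodic {α β : Type*} [AddCommGroup α] [LinearOrder α]
    [IsOrderedAddMonoid α] [Archimedean α] [PartialOrder β] {g : α → β} {T : α} (hT : 0 < T)
    (hmono : Monotone g) (hper : Function.Periodic g T) (x y : α) : g x = g y := by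
  have hle : ∀ a b, g a ≤ g b := fun a b => by
    obtain ⟨n, hn⟩ := Archimedean.arch (a - b) hT
    calc g a ≤ g (b + n • T) := hmono (sub_le_iff_le_add'.1 hn)
      _ = g b := hper.nsmul n b
  exact le_antisymm (hle x y) (hle y x)

theorem periodic_deriv {𝕜 F : Type*} [NontriviallyNormedField 𝕜] [NormedAddCommGroup F]
    [NormedSpace 𝕜 F] {f : 𝕜 → F} {T : 𝕜} (hf : Function.Periodic f T) :
    Function.Periodic (deriv f) T := fun x => by
  rw [← deriv_comp_add_const, hf.funext]

theorem mul_deriv_eq_zero_of_periodic_of_monovary {f f' w w' : ℝ → ℝ} {T : ℝ} (hT : 0 < T)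
    (hf : ∀ x, HasDerivAt f (f' x) x) (hw : ∀ x, HasDerivAt w (w' x) x)
    (hfT : Function.Periodic f T) (hwT : Function.Periodic w T)
    (hwf' : ∀ x, 0 ≤ w x * f' x) (hmono : Monovary w' f) (x : ℝ) : w x * f' x = 0 := by
  obtain ⟨ξ, -, hξ⟩ : ∃ ξ ∈ Set.Ioo 0 T, w' ξ = 0 :=
    exists_hasDerivAt_eq_zero hT (fun y _ => (hw y).continuousAt.continuousWithinAt) hwT.eq.symm
      fun y _ => hw y
  set V : ℝ → ℝ := fun y => w y * (f y - f ξ)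
  have hV : ∀ y, HasDerivAt V (w' y * (f y - f ξ) + w y * f' y) y := fun y =>
    (hw y).mul ((hf y).sub_const (f ξ))
  have hw'f : ∀ y, 0 ≤ w' y * (f y - f ξ) := fun y => by
    simpa only [hξ, sub_zero] using hmono.sub_mul_sub_nonneg ξ y
  have hVmono : Monotone V :=
    monotone_of_hasDerivAt_nonneg hV fun y => add_nonneg (hw'f y) (hwf' y)
  have hVT : Function.Periodic V T := fun y => by simp only [V, hwT y, hfT y]
  have hVconst : V = fun _ => V ξ := funext fun y => eq_of_monotone_of_periodic hT hVmono hVT y ξ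
  have hVderiv : w' x * (f x - f ξ) + w x * f' x = 0 :=
    (hV x).unique (hVconst ▸ hasDerivAt_const x (V ξ))
  exact ((add_eq_zero_iff_of_nonneg (hw'f x) (hwf' x)).1 hVderiv).2

/-- The signed curvature `κ(f)` of the graph of `f`, positive where `f` is convex. It is meaningful
only where `f` is twice differentiable, as `deriv` returns `0` at points of
non-differentiability. -/
noncomputable def graphCurvature (f : ℝ → ℝ) (x : ℝ) : ℝ :=
  deriv (deriv f) x / (1 + deriv f x ^ 2) ^ ((3 : ℝ) / 2)

theorem one_add_sq_rpow_three_halves (p : ℝ) :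
    (1 + p ^ 2) ^ ((3 : ℝ) / 2) = (1 + p ^ 2) * √(1 + p ^ 2) := by
  rw [sqrt_eq_rpow, ← rpow_one_add' (by positivity) (by norm_num)]
  norm_num

theorem hasDerivAt_sin_arctan_deriv {f : ℝ → ℝ} {x : ℝ} (hf' : DifferentiableAt ℝ (deriv f) x) :
    HasDerivAt (fun y => sin (arctan (deriv f y))) (graphCurvature f x) x := by
  refine hf'.hasDerivAt.arctan.sin.congr_deriv ?_
  rw [graphCurvature, one_add_sq_rpow_three_halves, cos_arctan]
  field_simp

theorem sin_arctan_mul_self_nonneg (p : ℝ) : 0 ≤ sin (arctan p) * p := by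
  rw [sin_arctan, div_mul_eq_mul_div]
  exact div_nonneg (mul_self_nonneg p) (sqrt_nonneg _)

theorem eq_of_periodic_of_monovary_graphCurvature {f : ℝ → ℝ} {T : ℝ} (hT : 0 < T)
    (hf : Differentiable ℝ f) (hf' : Differentiable ℝ (deriv f)) (hfT : Function.Periodic f T)
    (hmono : Monovary (graphCurvature f) f) (x y : ℝ) : f x = f y := by
  refine is_const_of_deriv_eq_zero hf (fun z => ?_) x y
  have hsin : sin (arctan (deriv f z)) * deriv f z = 0 :=
    mul_deriv_eq_zero_of_periodic_of_monovary hT (fun z => (hf z).hasDerivAt)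
      (fun z => hasDerivAt_sin_arctan_deriv (hf' z)) hfT
      ((periodic_deriv hfT).comp fun p => sin (arctan p))
      (fun z => sin_arctan_mul_self_nonneg _) hmono z
  exact (mul_eq_zero.1 hsin).elim sin_arctan_eq_zero.1 id

theorem monovary_of_mul_add_mul_eq {ι R : Type*} [CommRing R] [LinearOrder R]
    [IsStrictOrderedRing R] {γ ϖ c : R} (hγ : 0 < γ) (hϖ : ϖ ≤ 0) {κ f : ι → R}
    (h : ∀ i, γ * κ i + ϖ * f i = c) : Monovary κ f := fun i j hij => by
  have hϖf : ϖ * f j ≤ ϖ * f i := mul_le_mul_of_nonpos_left hij.le hϖ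
  exact le_of_mul_le_mul_left (by linarith [h i, h j]) hγ

theorem muskat_steady_state_trivial_general {γ ϖ c T : ℝ} (hγ : 0 < γ) (hϖ : ϖ ≤ 0) (hT : 0 < T)
    {f : ℝ → ℝ} (hf : Differentiable ℝ f) (hf' : Differentiable ℝ (deriv f))
    (hper : Function.Periodic f T)
    (hode : ∀ x, γ * deriv (deriv f) x / (1 + (deriv f x) ^ 2) ^ ((3 : ℝ) / 2) + ϖ * f x = c)
    (x : ℝ) : f x = ⨍ t in (0)..T, f t := by
  have hmono : Monovary (graphCurvature f) f :=
    monovary_of_mul_add_mul_eq hγ hϖ fun y => by rw [graphCurvature, ← mul_div_assoc, hode y]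
  have hconst : f = fun _ => f x :=
    funext fun y => eq_of_periodic_of_monovary_graphCurvature hT hf hf' hper hmono y x
  rw [hconst, interval_average_eq, intervalIntegral.integral_const, sub_zero, inv_smul_smul₀ hT.ne']

/-- if the fluid on the bottom is at least as dense as the fluid above
(`ϖ ≤ 0`) and `γ > 0`, then the only `2π`-periodic zero-mean solution of the steady-state
equation `γ·f''/(1+f'²)^(3/2) + ϖ·f = c` is the flat interface `f ≡ 0`. -/
theorem muskat_steady_state_trivial (γ ϖ c : ℝ) (hγ : 0 < γ) (hϖ : ϖ ≤ 0)
    (f : ℝ → ℝ) (hf : ContDiff ℝ 2 f)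
    (hper : ∀ x, f (x + 2 * π) = f x)
    (hode : ∀ x, γ * deriv (deriv f) x / (1 + (deriv f x) ^ 2) ^ ((3 : ℝ) / 2)
      + ϖ * f x = c)
    (hmean : ∫ x in (0 : ℝ)..(2 * π), f x = 0) :
    ∀ x, f x = 0 := fun x => by
  rw [muskat_steady_state_trivial_general hγ hϖ two_pi_pos (hf.differentiable two_ne_zero)
    hf.differentiable_deriv_two hper hode x, interval_average_eq, hmean, smul_zero]
end

section
/- Let f : ℝ → ℝ be continuously differentiable and 2π-periodic with sup|f| < 1, and let u : ℝ² → ℝ be twice continuously differentiable on an open set containing the closed region {(x,y) : f(x) ≤ y ≤ 1}, harmonic on Ω₊(f) = {(x,y) : f(x) < y < 1}, and 2π-periodic in x. Then ∫₀^{2π} ⟨∇u(x, f(x)), (−f'(x), 1)⟩ dx = ∫₀^{2π} ∂u/∂y(x, 1) dx. In particular, if ∂u/∂y(x,1) = 0 for all x, then ∫₀^{2π} ⟨∇u(x,f(x)), (−f'(x),1)⟩ dx = 0. -/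
open Real

/-!
Deform the lower graph `f` into the upper graph `g` through `f_s = (1 - s) f + s g`, and write
`q(s, x)` for the flux density of a `C¹` field `(P, Q)` through the graph of `f_s`. Then
`∂_s q + ∂_x ((g - f) P(x, f_s)) = (g - f) (P_x + Q_y)(x, f_s)`, and integrating over
`x ∈ [a, b]`, `s ∈ [0, 1]` gives the divergence theorem between the two graphs. Only `x`-derivatives
of the second term occur, never of the flux density itself, which involves `f'` and `g'`; this is
why `C¹` interfaces suffice. For the gradient of a periodic harmonic function the divergence and the
lateral contributions vanish.
-/

open AffineMap Function MeasureTheory Set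
open scoped Interval

section PartialDerivatives

variable {E : Type*} [NormedAddCommGroup E] [NormedSpace ℝ E] {P : ℝ → ℝ → E}

lemma hasDerivAt_fst_slice {x y : ℝ} (hP : DifferentiableAt ℝ (uncurry P) (x, y)) :
    HasDerivAt (fun s => P s y) (fderiv ℝ (uncurry P) (x, y) (1, 0)) x :=
  hP.hasFDerivAt.comp_hasDerivAt (f := fun s => (s, y)) x
    ((hasDerivAt_id x).prodMk (hasDerivAt_const x y))

lemma hasDerivAt_snd_slice {x y : ℝ} (hP : DifferentiableAt ℝ (uncurry P) (x, y)) :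
    HasDerivAt (P x) (fderiv ℝ (uncurry P) (x, y) (0, 1)) y :=
  hP.hasFDerivAt.comp_hasDerivAt (f := fun t => (x, t)) y
    ((hasDerivAt_const y x).prodMk (hasDerivAt_id y))

lemma hasDerivAt_comp_curve {α β : ℝ → ℝ} {α' β' t : ℝ}
    (hP : DifferentiableAt ℝ (uncurry P) (α t, β t))
    (hα : HasDerivAt α α' t) (hβ : HasDerivAt β β' t) :
    HasDerivAt (fun τ => P (α τ) (β τ))
      (α' • deriv (fun x => P x (β t)) (α t) + β' • deriv (P (α t)) (β t)) t := by
  refine (hP.hasFDerivAt.comp_hasDerivAt (f := fun τ => (α τ, β τ)) t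
    (hα.prodMk hβ)).congr_deriv ?_
  rw [(hasDerivAt_fst_slice hP).deriv, (hasDerivAt_snd_slice hP).deriv, ← map_smul, ← map_smul,
    ← map_add]
  simp only [Prod.smul_mk, Prod.mk_add_mk, smul_eq_mul, mul_one, mul_zero, add_zero, zero_add]

variable {U : Set (ℝ × ℝ)} {m n : WithTop ℕ∞}

lemma contDiffOn_deriv_fst (hU : IsOpen U) (hP : ContDiffOn ℝ n (uncurry P) U) (hmn : m + 1 ≤ n) :
    ContDiffOn ℝ m (fun p : ℝ × ℝ => deriv (fun x => P x p.2) p.1) U :=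
  ((hP.fderiv_of_isOpen hU hmn).clm_apply contDiffOn_const).congr fun p hp =>
    (hasDerivAt_fst_slice ((hP.contDiffAt (hU.mem_nhds hp)).differentiableAt
      (by rintro rfl; simp at hmn))).deriv

lemma contDiffOn_deriv_snd (hU : IsOpen U) (hP : ContDiffOn ℝ n (uncurry P) U) (hmn : m + 1 ≤ n) :
    ContDiffOn ℝ m (fun p : ℝ × ℝ => deriv (P p.1) p.2) U :=
  ((hP.fderiv_of_isOpen hU hmn).clm_apply contDiffOn_const).congr fun p hp =>
    (hasDerivAt_snd_slice ((hP.contDiffAt (hU.mem_nhds hp)).differentiableAt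
      (by rintro rfl; simp at hmn))).deriv

end PartialDerivatives

section Rectangle

variable {E : Type*} [NormedAddCommGroup E] {a b c d : ℝ} {F : ℝ → ℝ → E}

lemma integrableOn_uIoc_prod_of_continuousOn
    (hF : ContinuousOn (uncurry F) ([[a, b]] ×ˢ [[c, d]])) :
    IntegrableOn (uncurry F) (Ι a b ×ˢ Ι c d) :=
  (hF.integrableOn_compact (isCompact_uIcc.prod isCompact_uIcc)).mono_set
    (prod_mono uIoc_subset_uIcc uIoc_subset_uIcc)

variable [NormedSpace ℝ E]

lemma intervalIntegrable_intervalIntegral (hF : IntegrableOn (uncurry F) (Ι a b ×ˢ Ι c d)) :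
    IntervalIntegrable (fun x => ∫ s in c..d, F x s) volume a b := by
  rw [IntegrableOn, Measure.volume_eq_prod, ← Measure.prod_restrict] at hF
  simp_rw [intervalIntegrable_iff, intervalIntegral.intervalIntegral_eq_integral_uIoc]
  exact hF.integral_prod_left.smul _

variable [CompleteSpace E] {Φ Ψ Φ' Ψ' : ℝ → ℝ → E}

-- Mathlib's divergence theorem would need `Φ` and `Ψ` to be jointly differentiable.
theorem integral_integral_add_of_hasDerivAt
    (hΦ : ∀ x ∈ [[a, b]], ∀ s ∈ [[c, d]], HasDerivAt (fun x => Φ x s) (Φ' x s) x)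
    (hΨ : ∀ x ∈ [[a, b]], ∀ s ∈ [[c, d]], HasDerivAt (Ψ x) (Ψ' x s) s)
    (hΦ' : ContinuousOn (uncurry Φ') ([[a, b]] ×ˢ [[c, d]]))
    (hΨ' : ContinuousOn (uncurry Ψ') ([[a, b]] ×ˢ [[c, d]])) :
    ∫ x in a..b, ∫ s in c..d, (Φ' x s + Ψ' x s) =
      (∫ s in c..d, (Φ b s - Φ a s)) + ∫ x in a..b, (Ψ x d - Ψ x c) := by
  have hΦ'int := integrableOn_uIoc_prod_of_continuousOn hΦ'
  have hΨ'int := integrableOn_uIoc_prod_of_continuousOn hΨ'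
  calc ∫ x in a..b, ∫ s in c..d, (Φ' x s + Ψ' x s)
      = ∫ x in a..b, ((∫ s in c..d, Φ' x s) + ∫ s in c..d, Ψ' x s) :=
        intervalIntegral.integral_congr fun x hx => intervalIntegral.integral_add
          (hΦ'.uncurry_left x hx).intervalIntegrable (hΨ'.uncurry_left x hx).intervalIntegrable
    _ = (∫ s in c..d, ∫ x in a..b, Φ' x s) + ∫ x in a..b, ∫ s in c..d, Ψ' x s := by
        rw [intervalIntegral.integral_add (intervalIntegrable_intervalIntegral hΦ'int)
          (intervalIntegrable_intervalIntegral hΨ'int),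
          intervalIntegral_intervalIntegral_swap hΦ'int]
    _ = (∫ s in c..d, (Φ b s - Φ a s)) + ∫ x in a..b, (Ψ x d - Ψ x c) := by
        congr 1
        · exact intervalIntegral.integral_congr fun s hs =>
            intervalIntegral.integral_eq_sub_of_hasDerivAt (fun x hx => hΦ x hx s hs)
              (hΦ'.uncurry_right s hs).intervalIntegrable
        · exact intervalIntegral.integral_congr fun x hx =>
            intervalIntegral.integral_eq_sub_of_hasDerivAt (hΨ x hx)
              (hΨ'.uncurry_left x hx).intervalIntegrable

end Rectangle

section GraphInterpolation

variable {f g : ℝ → ℝ} {s x a b : ℝ} {U : Set (ℝ × ℝ)}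

lemma hasDerivAt_lineMap_graph (hf : DifferentiableAt ℝ f x) (hg : DifferentiableAt ℝ g x) :
    HasDerivAt (lineMap f g s) (lineMap (deriv f x) (deriv g x) s) x := by
  simp only [lineMap_apply_module]
  exact (hf.hasDerivAt.const_smul _).add (hg.hasDerivAt.const_smul _)

lemma lineMap_graph_mem (hsub : ∀ x ∈ [[a, b]], ∀ y ∈ [[f x, g x]], (x, y) ∈ U)
    (hx : x ∈ [[a, b]]) (hs : s ∈ [[0, 1]]) : (x, lineMap f g s x) ∈ U := by
  refine hsub x hx _ ?_
  rw [uIcc_of_le zero_le_one] at hs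
  rw [pi_lineMap_apply, ← segment_eq_uIcc]
  exact lineMap_mem_segment ℝ _ _ hs

lemma continuousOn_comp_lineMap_graph {X : Type*} [TopologicalSpace X] {K : ℝ × ℝ → X}
    (hK : ContinuousOn K U) (hf : Continuous f) (hg : Continuous g)
    (hsub : ∀ x ∈ [[a, b]], ∀ y ∈ [[f x, g x]], (x, y) ∈ U) :
    ContinuousOn (fun p : ℝ × ℝ => K (p.1, lineMap f g p.2 p.1)) ([[a, b]] ×ˢ [[0, 1]]) := by
  have hcont : Continuous fun p : ℝ × ℝ => (p.1, lineMap f g p.2 p.1) := by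
    simp only [pi_lineMap_apply]
    exact continuous_fst.prodMk
      ((hf.comp continuous_fst).lineMap (hg.comp continuous_fst) continuous_snd)
  exact hK.comp hcont.continuousOn fun p hp => lineMap_graph_mem hsub hp.1 hp.2

end GraphInterpolation

section GraphFlux

variable {E : Type*} [NormedAddCommGroup E] [NormedSpace ℝ E]

/-- The divergence `P_x + Q_y` of the planar field `(P, Q)`. The components are curried so that the
slice derivatives match the iterated `deriv`s by which harmonicity is expressed. -/
noncomputable def planarDiv (P Q : ℝ → ℝ → E) (x y : ℝ) : E :=
  deriv (fun x' => P x' y) x + deriv (Q x) y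

/-- The upward flux density, per unit of `dx`, of the planar field `(P, Q)` through the graph of
`f`: the pairing of `(P, Q)` with the non-normalized upward normal `(-f', 1)`. -/
noncomputable def graphFlux (P Q : ℝ → ℝ → E) (f : ℝ → ℝ) (x : ℝ) : E :=
  -deriv f x • P x (f x) + Q x (f x)

/-- The flux density of the horizontal component `P` through the vertical segment from `(x, f x)`
to `(x, g x)`, per unit of the affine parameter `s` of that segment. -/
noncomputable def verticalFlux (P : ℝ → ℝ → E) (f g : ℝ → ℝ) (s x : ℝ) : E :=
  (g x - f x) • P x (lineMap f g s x)

variable {P Q : ℝ → ℝ → E} {f g : ℝ → ℝ} {s x a b : ℝ} {U : Set (ℝ × ℝ)}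

lemma integral_verticalFlux (P : ℝ → ℝ → E) (f g : ℝ → ℝ) (x : ℝ) :
    ∫ s in (0 : ℝ)..1, verticalFlux P f g s x = ∫ y in f x..g x, P x y := by
  simp only [verticalFlux, pi_lineMap_apply, lineMap_apply_ring', mul_comm _ (g x - f x),
    intervalIntegral.integral_smul, intervalIntegral.smul_integral_comp_mul_add, mul_zero, mul_one,
    zero_add, sub_add_cancel]

lemma hasDerivAt_verticalFlux (hf : DifferentiableAt ℝ f x) (hg : DifferentiableAt ℝ g x)
    (hP : DifferentiableAt ℝ (uncurry P) (x, lineMap f g s x)) :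
    HasDerivAt (verticalFlux P f g s)
      ((deriv g x - deriv f x) • P x (lineMap f g s x) +
        (g x - f x) • (deriv (fun x' => P x' (lineMap f g s x)) x +
          lineMap (deriv f x) (deriv g x) s • deriv (P x) (lineMap f g s x))) x := by
  have hcomp := hasDerivAt_comp_curve hP (hasDerivAt_id x) (hasDerivAt_lineMap_graph hf hg)
  refine ((hg.hasDerivAt.sub hf.hasDerivAt).smul hcomp).congr_deriv ?_
  rw [one_smul, add_comm]
  rfl

lemma hasDerivAt_graphFlux_lineMap (hf : DifferentiableAt ℝ f x) (hg : DifferentiableAt ℝ g x)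
    (hP : DifferentiableAt ℝ (uncurry P) (x, lineMap f g s x))
    (hQ : DifferentiableAt ℝ (uncurry Q) (x, lineMap f g s x)) :
    HasDerivAt (fun s => graphFlux P Q (lineMap f g s) x)
      (verticalFlux (planarDiv P Q) f g s x - deriv (verticalFlux P f g s) x) s := by
  have hheight : HasDerivAt (fun s => lineMap f g s x) (g x - f x) s := by
    simp only [pi_lineMap_apply]
    exact hasDerivAt_lineMap
  have hP' := hasDerivAt_comp_curve hP (hasDerivAt_const s x) hheight
  have hQ' := hasDerivAt_comp_curve hQ (hasDerivAt_const s x) hheight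
  simp only [graphFlux, (hasDerivAt_lineMap_graph hf hg).deriv]
  refine ((hasDerivAt_lineMap.neg.smul hP').add hQ').congr_deriv ?_
  rw [(hasDerivAt_verticalFlux hf hg hP).deriv, verticalFlux, planarDiv]
  module

lemma continuousOn_verticalFlux (hf : Continuous f) (hg : Continuous g)
    (hsub : ∀ x ∈ [[a, b]], ∀ y ∈ [[f x, g x]], (x, y) ∈ U) (hP : ContinuousOn (uncurry P) U) :
    ContinuousOn (fun p : ℝ × ℝ => verticalFlux P f g p.2 p.1) ([[a, b]] ×ˢ [[0, 1]]) :=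
  ((hg.comp continuous_fst).sub (hf.comp continuous_fst)).continuousOn.smul
    (continuousOn_comp_lineMap_graph hP hf hg hsub)

lemma continuousOn_deriv_verticalFlux (hf : ContDiff ℝ 1 f) (hg : ContDiff ℝ 1 g) (hU : IsOpen U)
    (hsub : ∀ x ∈ [[a, b]], ∀ y ∈ [[f x, g x]], (x, y) ∈ U)
    (hP : ContDiffOn ℝ 1 (uncurry P) U) :
    ContinuousOn (fun p : ℝ × ℝ => deriv (verticalFlux P f g p.2) p.1)
      ([[a, b]] ×ˢ [[0, 1]]) := by
  have hf' : Continuous fun p : ℝ × ℝ => deriv f p.1 := hf.continuous_deriv_one.comp continuous_fst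
  have hg' : Continuous fun p : ℝ × ℝ => deriv g p.1 := hg.continuous_deriv_one.comp continuous_fst
  have hheight : Continuous fun p : ℝ × ℝ => g p.1 - f p.1 := by fun_prop
  have alongGraphs {K : ℝ × ℝ → E} (hK : ContDiffOn ℝ 0 K U) :=
    continuousOn_comp_lineMap_graph hK.continuousOn hf.continuous hg.continuous hsub
  have hPx := alongGraphs (contDiffOn_deriv_fst hU hP (zero_add 1).le)
  have hPy := alongGraphs (contDiffOn_deriv_snd hU hP (zero_add 1).le)
  have hslope : Continuous fun p : ℝ × ℝ => lineMap (deriv f p.1) (deriv g p.1) p.2 :=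
    hf'.lineMap hg' continuous_snd
  refine (((hg'.sub hf').continuousOn.smul (alongGraphs (hP.of_le zero_le_one))).add
    (hheight.continuousOn.smul (hPx.add (hslope.continuousOn.smul hPy)))).congr fun p hp => ?_
  have hmem := lineMap_graph_mem hsub hp.1 hp.2
  exact (hasDerivAt_verticalFlux (hf.differentiable_one _) (hg.differentiable_one _)
    ((hP.contDiffAt (hU.mem_nhds hmem)).differentiableAt one_ne_zero)).deriv

lemma continuousOn_planarDiv (hU : IsOpen U) (hP : ContDiffOn ℝ 1 (uncurry P) U)
    (hQ : ContDiffOn ℝ 1 (uncurry Q) U) : ContinuousOn (uncurry (planarDiv P Q)) U :=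
  (contDiffOn_deriv_fst hU hP (zero_add 1).le).continuousOn.add
    (contDiffOn_deriv_snd hU hQ (zero_add 1).le).continuousOn

theorem integral_planarDiv_between_graphs [CompleteSpace E]
    (hf : ContDiff ℝ 1 f) (hg : ContDiff ℝ 1 g) (hU : IsOpen U)
    (hsub : ∀ x ∈ [[a, b]], ∀ y ∈ [[f x, g x]], (x, y) ∈ U)
    (hP : ContDiffOn ℝ 1 (uncurry P) U) (hQ : ContDiffOn ℝ 1 (uncurry Q) U) :
    ∫ x in a..b, ∫ y in f x..g x, planarDiv P Q x y =
      ((∫ y in f b..g b, P b y) - ∫ y in f a..g a, P a y) +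
        ∫ x in a..b, (graphFlux P Q g x - graphFlux P Q f x) := by
  have differentiableAt {K : ℝ → ℝ → E} (hK : ContDiffOn ℝ 1 (uncurry K) U) {x s : ℝ}
      (hx : x ∈ [[a, b]]) (hs : s ∈ [[0, 1]]) :
      DifferentiableAt ℝ (uncurry K) (x, lineMap f g s x) :=
    (hK.contDiffAt (hU.mem_nhds (lineMap_graph_mem hsub hx hs))).differentiableAt one_ne_zero
  have hf' := hf.differentiable_one
  have hg' := hg.differentiable_one
  have hvert := continuousOn_verticalFlux hf.continuous hg.continuous hsub hP.continuousOn
  have hvert' := continuousOn_deriv_verticalFlux hf hg hU hsub hP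
  have hdiv := continuousOn_verticalFlux hf.continuous hg.continuous hsub
    (continuousOn_planarDiv hU hP hQ)
  have hrect := integral_integral_add_of_hasDerivAt
    (Φ := fun x s => verticalFlux P f g s x) (Ψ := fun x s => graphFlux P Q (lineMap f g s) x)
    (fun x hx s hs =>
      (hasDerivAt_verticalFlux (hf' x) (hg' x)
        (differentiableAt hP hx hs)).differentiableAt.hasDerivAt)
    (fun x hx s hs => hasDerivAt_graphFlux_lineMap (hf' x) (hg' x)
      (differentiableAt hP hx hs) (differentiableAt hQ hx hs))
    hvert' (hdiv.sub hvert')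
  have hends : ∫ s in (0 : ℝ)..1, (verticalFlux P f g s b - verticalFlux P f g s a) =
      (∫ y in f b..g b, P b y) - ∫ y in f a..g a, P a y := by
    have hint {x : ℝ} (hx : x ∈ [[a, b]]) :
        IntervalIntegrable (fun s => verticalFlux P f g s x) volume 0 1 :=
      (ContinuousOn.uncurry_left (f := fun x s => verticalFlux P f g s x) x hx
        hvert).intervalIntegrable
    rw [← integral_verticalFlux, ← integral_verticalFlux]
    exact intervalIntegral.integral_sub (hint right_mem_uIcc) (hint left_mem_uIcc)
  simpa only [add_sub_cancel, lineMap_apply_one, lineMap_apply_zero, hends,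
    integral_verticalFlux] using hrect

lemma intervalIntegrable_graphFlux (hf : ContDiff ℝ 1 f)
    (hsub : ∀ x ∈ [[a, b]], (x, f x) ∈ U)
    (hP : ContinuousOn (uncurry P) U) (hQ : ContinuousOn (uncurry Q) U) :
    IntervalIntegrable (graphFlux P Q f) volume a b := by
  have hgraph : ContinuousOn (fun x => (x, f x)) [[a, b]] :=
    (continuous_id.prodMk hf.continuous).continuousOn
  exact ((hf.continuous_deriv_one.neg.continuousOn.smul (hP.comp hgraph hsub)).add
    (hQ.comp hgraph hsub)).intervalIntegrable

theorem integral_graphFlux_eq_of_planarDiv_eq_zero [CompleteSpace E]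
    (hf : ContDiff ℝ 1 f) (hg : ContDiff ℝ 1 g) (hU : IsOpen U)
    (hsub : ∀ x ∈ [[a, b]], ∀ y ∈ [[f x, g x]], (x, y) ∈ U)
    (hP : ContDiffOn ℝ 1 (uncurry P) U) (hQ : ContDiffOn ℝ 1 (uncurry Q) U)
    (hdiv : ∀ x ∈ [[a, b]], ∀ y ∈ uIoo (f x) (g x), planarDiv P Q x y = 0)
    (hfab : f b = f a) (hgab : g b = g a) (hPab : EqOn (P b) (P a) [[f a, g a]]) :
    ∫ x in a..b, graphFlux P Q f x = ∫ x in a..b, graphFlux P Q g x := by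
  have hzero : ∫ x in a..b, ∫ y in f x..g x, planarDiv P Q x y = 0 := by
    refine (intervalIntegral.integral_congr fun x hx => ?_).trans intervalIntegral.integral_zero
    exact (intervalIntegral.integral_congr_uIoo (hdiv x hx)).trans intervalIntegral.integral_zero
  rw [integral_planarDiv_between_graphs hf hg hU hsub hP hQ, hfab, hgab,
    intervalIntegral.integral_congr hPab, sub_self, zero_add, intervalIntegral.integral_sub
      (intervalIntegrable_graphFlux hg (fun x hx => hsub x hx _ right_mem_uIcc)
        hP.continuousOn hQ.continuousOn)
      (intervalIntegrable_graphFlux hf (fun x hx => hsub x hx _ left_mem_uIcc)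
        hP.continuousOn hQ.continuousOn)] at hzero
  exact (sub_eq_zero.mp hzero).symm

theorem muskat_volume_conservation_general [CompleteSpace E] {T : ℝ}
    (hf : ContDiff ℝ 1 f) (hg : ContDiff ℝ 1 g) (hfT : f.Periodic T) (hgT : g.Periodic T)
    {u : ℝ → ℝ → E} (hU : IsOpen U) (hsub : ∀ x, ∀ y ∈ [[f x, g x]], (x, y) ∈ U)
    (hu : ContDiffOn ℝ 2 (uncurry u) U)
    (hharm : ∀ x, ∀ y ∈ uIoo (f x) (g x),
      deriv (deriv (fun s => u s y)) x + deriv (deriv (u x)) y = 0)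
    (huT : u.Periodic T) :
    ∫ x in a..a + T, graphFlux (fun x y => deriv (fun s => u s y) x) (fun x => deriv (u x)) f x =
      ∫ x in a..a + T, graphFlux (fun x y => deriv (fun s => u s y) x) (fun x => deriv (u x)) g x :=
  integral_graphFlux_eq_of_planarDiv_eq_zero hf hg hU (fun x _ => hsub x)
    (contDiffOn_deriv_fst hU hu one_add_one_eq_two.le)
    (contDiffOn_deriv_snd hU hu one_add_one_eq_two.le)
    (fun x _ => hharm x) (hfT a) (hgT a)
    (fun y _ => by rw [← deriv_comp_add_const]; simp only [huT _])

end GraphFlux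

/-- the divergence-theorem identity behind conservation of volume for the
Muskat problem: for a `2π`-periodic harmonic potential `u` on the domain
`Ω₊(f) = {(x,y) : f(x) < y < 1}`, `C²` on a neighbourhood of the closed region,
`∫₀^{2π} ⟨∇u(x,f(x)), (−f'(x),1)⟩ dx = ∫₀^{2π} ∂u/∂y(x,1) dx`; in particular the
left-hand side vanishes when the Neumann datum on the top boundary is zero. -/
theorem muskat_volume_conservation (f : ℝ → ℝ)
    (hf : ContDiff ℝ 1 f) (hper : ∀ x, f (x + 2 * π) = f x) (hsmall : ∀ x, |f x| < 1)
    (u : ℝ → ℝ → ℝ)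
    (hreg : ∃ U : Set (ℝ × ℝ), IsOpen U ∧ {p : ℝ × ℝ | f p.1 ≤ p.2 ∧ p.2 ≤ 1} ⊆ U ∧
      ContDiffOn ℝ 2 (Function.uncurry u) U)
    (hharm : ∀ x y : ℝ, f x < y → y < 1 →
      deriv (deriv (fun s => u s y)) x + deriv (deriv (fun t => u x t)) y = 0)
    (huper : ∀ x y : ℝ, u (x + 2 * π) y = u x y) :
    (∫ x in (0 : ℝ)..(2 * π),
        (-(deriv f x) * deriv (fun s => u s (f x)) x + deriv (fun t => u x t) (f x)))
      = ∫ x in (0 : ℝ)..(2 * π), deriv (fun t => u x t) 1 ∧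
    ((∀ x : ℝ, deriv (fun t => u x t) 1 = 0) →
      (∫ x in (0 : ℝ)..(2 * π),
          (-(deriv f x) * deriv (fun s => u s (f x)) x + deriv (fun t => u x t) (f x)))
        = 0) := by
  obtain ⟨U, hU, hsub, hu⟩ := hreg
  have hle : ∀ x, f x ≤ 1 := fun x => (abs_lt.1 (hsmall x)).2.le
  have main := muskat_volume_conservation_general (a := 0) (g := fun _ => 1) hf contDiff_const
    hper (fun _ => rfl) hU (fun x y hy => hsub (by rwa [uIcc_of_le (hle x)] at hy)) hu
    (fun x y hy => by
      rw [uIoo_of_le (hle x)] at hy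
      exact hharm x y hy.1 hy.2)
    (fun x => funext (huper x))
  simp only [graphFlux, deriv_const, neg_zero, smul_eq_mul, zero_mul, zero_add] at main
  refine ⟨main, fun htop => ?_⟩
  simp only [main, htop, intervalIntegral.integral_zero]
end
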